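/- Let (g,A) be a perfect compatible pair over a field k of characteristic 0. Then for every associative k-algebra F one has (g,A)(F) = F ⊗ g + Σ_{k≥1} ( I_k(F) ⊗ [g, g^{k+1}] + [F, I_{k−1}(F)] ⊗ g^{k+1} ); that is, the Lie subalgebra of F ⊗ A generated by F ⊗ g equals its upper bound tilde(g,A)(F). -/

import Mathlib

open Submodule TensorProduct

variable (K : Type*) [Field K]

/-- The span of all products `a * b`, `a ∈ S`, `b ∈ T` (the subspace `S·T`). -/
def pSpan {R : Type*} [NonUnitalRing R] [Module K R] (S T : Submodule K R) : Submodule K R :=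
  Submodule.span K {x | ∃ a ∈ S, ∃ b ∈ T, x = a * b}

/-- The span of all commutators `a * b - b * a`, `a ∈ S`, `b ∈ T` (the subspace `[S, T]`). -/
def bSpan {R : Type*} [NonUnitalRing R] [Module K R] (S T : Submodule K R) : Submodule K R :=
  Submodule.span K {x | ∃ a ∈ S, ∃ b ∈ T, x = a * b - b * a}

/-- The `k`-th commutator space `S^(k)`: `S^(0) = S`, `S^(k) = [S, S^(k-1)]`.
For `S = ⊤` this is the commutator space `F^(k)` of the algebra. -/
def cSp {R : Type*} [NonUnitalRing R] [Module K R] (S : Submodule K R) : ℕ → Submodule K R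
  | 0 => S
  | (k+1) => bSpan K S (cSp S k)

/-- `IklS K S ℓ k` is `I_k^ℓ(R, S)`: the sum of `S^(λ₁) ⋯ S^(λ_ℓ)` over
`λ₁ + ⋯ + λ_ℓ = k`, defined via the recursion `I_k^1 = S^(k)`,
`I_k^ℓ = Σ_{0 ≤ i ≤ k} S^(i) · I_{k-i}^{ℓ-1}`.  The first argument is the
superscript `ℓ`, the second the subscript `k`; the (unused) value at `ℓ = 0` is `⊥`.
For `S = ⊤` this is `I_k^ℓ(F)`. -/
def IklS {R : Type*} [NonUnitalRing R] [Module K R] (S : Submodule K R) :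
    ℕ → ℕ → Submodule K R
  | 0, _ => ⊥
  | 1, k => cSp K S k
  | (ℓ+2), k => ∑ i ∈ Finset.range (k+1), pSpan K (cSp K S i) (IklS S (ℓ+1) (k-i))

/-- `I_k^{≤ℓ}(F) = Σ_{1 ≤ ℓ' ≤ ℓ} I_k^{ℓ'}(F)`. -/
def Ikle {R : Type*} [NonUnitalRing R] [Module K R] (ℓ k : ℕ) : Submodule K R :=
  ∑ ℓ' ∈ Finset.Icc 1 ℓ, IklS K (⊤ : Submodule K R) ℓ' k

/-- `I_k(F) = Σ_{ℓ ≥ 1} I_k^ℓ(F)`. -/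
def Ik (R : Type*) [NonUnitalRing R] [Module K R] (k : ℕ) : Submodule K R :=
  ⨆ ℓ : ℕ, IklS K (⊤ : Submodule K R) (ℓ + 1) k

/-- `g^n`: the span of all products of `n` elements of `g` (set to `⊥` for `n = 0`). -/
def gPow {R : Type*} [NonUnitalRing R] [Module K R] (g : Submodule K R) : ℕ → Submodule K R
  | 0 => ⊥
  | 1 => g
  | (n+2) => pSpan K g (gPow g (n+1))

/-- The Lie subalgebra (under the commutator bracket) generated by a subspace `S`:
the smallest subspace containing `S` and closed under `(x, y) ↦ x * y - y * x`. -/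
def lieGen {R : Type*} [NonUnitalRing R] [Module K R] (S : Submodule K R) : Submodule K R :=
  sInf {T | S ≤ T ∧ ∀ x ∈ T, ∀ y ∈ T, x * y - y * x ∈ T}

/-- The subspace `S ⊗ T` of `F ⊗[K] A`: the span of all pure tensors `f ⊗ a`
with `f ∈ S`, `a ∈ T`. -/
def tSpan {F A : Type*} [AddCommGroup F] [Module K F] [AddCommGroup A] [Module K A]
    (S : Submodule K F) (T : Submodule K A) : Submodule K (F ⊗[K] A) :=
  Submodule.span K {z | ∃ f ∈ S, ∃ a ∈ T, z = f ⊗ₜ[K] a}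

/-- The current Lie algebra `(g, A)(F)`: the Lie subalgebra of `F ⊗ A` (with the
commutator bracket) generated by `F ⊗ g`. -/
def currentLie {F A : Type*} [NonUnitalRing F] [Module K F] [SMulCommClass K F F]
    [IsScalarTower K F F] [Ring A] [Algebra K A] (g : Submodule K A) :
    Submodule K (F ⊗[K] A) :=
  lieGen K (tSpan K (⊤ : Submodule K F) g)

/-!
Write `L = (g, A)(F)`. Everything rests on the identity
`[f ⊗ x, p ⊗ y] = fp ⊗ [x, y] + [f, p] ⊗ yx`. It shows that `F ⊗ g` normalizes the right-hand
side, which therefore contains `L` by the Jacobi identity.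

Conversely, suppose `P ⊗ g^n ⊆ L` with `[F, P] ⊆ P`. Modulo `L` the identity reads
`fp ⊗ [x, y] ≡ -[f, p] ⊗ yx` for `x ∈ g`, `y ∈ g^n`. Rotating a product of `n + 1` elements of `g`
cyclically through a full turn changes nothing on the left, so `(n + 1) [f, p] ⊗ w ∈ L`, and in
characteristic zero `[F, P] ⊗ g^{n+1} ⊆ L`. Hence also `FP ⊗ [g, g^n] ⊆ L`. By the Leibniz rule
`I_{k+1}(F)` is contained in the left ideal generated by `P = [F, I_k(F)]`, so
`[F, I_k(F)] ⊗ g^{k+2} ⊆ L` implies `I_{k+1}(F) ⊗ [g, g^{k+2}] ⊆ L`. Perfectness splits `g^{k+3}`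
into `[g, g^{k+2}] g`, where the identity applies once more, and a part lying in `g^{k+2}`; this
gives `[F, I_{k+1}(F)] ⊗ g^{k+3} ⊆ L` and closes the induction on `k`.
-/

section Spans

variable {K} {R : Type*} [NonUnitalRing R] [Module K R] {S S' T T' U : Submodule K R} {a b : R}

lemma mul_mem_pSpan (ha : a ∈ S) (hb : b ∈ T) : a * b ∈ pSpan K S T :=
  subset_span ⟨a, ha, b, hb, rfl⟩

lemma pSpan_le : pSpan K S T ≤ U ↔ ∀ a ∈ S, ∀ b ∈ T, a * b ∈ U :=
  span_le.trans ⟨fun h a ha b hb => h ⟨a, ha, b, hb, rfl⟩,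
    fun h => by rintro _ ⟨a, ha, b, hb, rfl⟩; exact h a ha b hb⟩

lemma pSpan_mono (hS : S ≤ S') (hT : T ≤ T') : pSpan K S T ≤ pSpan K S' T' :=
  pSpan_le.2 fun _ ha _ hb => mul_mem_pSpan (hS ha) (hT hb)

lemma commutator_mem_bSpan (ha : a ∈ S) (hb : b ∈ T) : a * b - b * a ∈ bSpan K S T :=
  subset_span ⟨a, ha, b, hb, rfl⟩

lemma bSpan_le : bSpan K S T ≤ U ↔ ∀ a ∈ S, ∀ b ∈ T, a * b - b * a ∈ U :=
  span_le.trans ⟨fun h a ha b hb => h ⟨a, ha, b, hb, rfl⟩,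
    fun h => by rintro _ ⟨a, ha, b, hb, rfl⟩; exact h a ha b hb⟩

lemma bSpan_mono (hS : S ≤ S') (hT : T ≤ T') : bSpan K S T ≤ bSpan K S' T' :=
  bSpan_le.2 fun _ ha _ hb => commutator_mem_bSpan (hS ha) (hT hb)

lemma pSpan_le_iff_mulRight [IsScalarTower K R R] :
    pSpan K S T ≤ U ↔ ∀ b ∈ T, S ≤ U.comap (LinearMap.mulRight K b) :=
  pSpan_le.trans ⟨fun h b hb _ ha => h _ ha b hb, fun h _ ha b hb => h b hb ha⟩

/-- The left ideal `P + RP` generated by `P`; both summands are needed as `R` may lack a unit. -/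
def leftIdealSpan (P : Submodule K R) : Submodule K R := P ⊔ pSpan K ⊤ P

variable [SMulCommClass K R R]

lemma pSpan_le_iff_mulLeft :
    pSpan K S T ≤ U ↔ ∀ a ∈ S, T ≤ U.comap (LinearMap.mulLeft K a) := pSpan_le

lemma pSpan_top_leftIdealSpan_le (P : Submodule K R) :
    pSpan K ⊤ (leftIdealSpan P) ≤ leftIdealSpan P := by
  refine pSpan_le_iff_mulLeft.2 fun f _ => sup_le (fun p hp => ?_) (pSpan_le.2 fun a _ p hp => ?_)
  · exact mem_sup_right (mul_mem_pSpan mem_top hp)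
  · rw [mem_comap, LinearMap.mulLeft_apply, ← mul_assoc]
    exact mem_sup_right (mul_mem_pSpan mem_top hp)

variable [IsScalarTower K R R]

variable (K) in
/-- The inner derivation `b ↦ [a, b] = ab - ba`, linear in `a` as well. -/
def innerDer : R →ₗ[K] R →ₗ[K] R := LinearMap.mul K R - (LinearMap.mul K R).flip

lemma innerDer_apply (a b : R) : innerDer K a b = a * b - b * a := rfl

lemma innerDer_mul (a b c : R) :
    innerDer K a (b * c) = innerDer K a b * c + b * innerDer K a c := by
  simp only [innerDer_apply]
  noncomm_ring

lemma innerDer_mem_bSpan (ha : a ∈ S) (hb : b ∈ T) : innerDer K a b ∈ bSpan K S T :=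
  commutator_mem_bSpan ha hb

lemma bSpan_le_iff_innerDer : bSpan K S T ≤ U ↔ ∀ a ∈ S, T ≤ U.comap (innerDer K a) := bSpan_le

lemma bSpan_eq_map₂ (S T : Submodule K R) : bSpan K S T = map₂ (innerDer K) S T :=
  le_antisymm (bSpan_le.2 fun _ ha _ hb => apply_mem_map₂ (innerDer K) ha hb)
    (map₂_le.2 fun _ ha _ hb => innerDer_mem_bSpan ha hb)

lemma bSpan_iSup {ι : Sort*} (S : Submodule K R) (T : ι → Submodule K R) :
    bSpan K S (⨆ i, T i) = ⨆ i, bSpan K S (T i) := by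
  simp only [bSpan_eq_map₂, map₂_iSup_right]

lemma bSpan_pSpan_le (S T U : Submodule K R) :
    bSpan K S (pSpan K T U) ≤ pSpan K (bSpan K S T) U ⊔ pSpan K T (bSpan K S U) := by
  refine bSpan_le_iff_innerDer.2 fun a ha => pSpan_le.2 fun b hb c hc => ?_
  rw [mem_comap, innerDer_mul]
  exact add_mem (mem_sup_left (mul_mem_pSpan (innerDer_mem_bSpan ha hb) hc))
    (mem_sup_right (mul_mem_pSpan hb (innerDer_mem_bSpan ha hc)))

lemma pSpan_bSpan_le (S T U : Submodule K R) :
    pSpan K (bSpan K S T) U ≤ bSpan K S (pSpan K T U) ⊔ pSpan K T (bSpan K S U) := by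
  refine pSpan_le_iff_mulRight.2 fun c hc => bSpan_le.2 fun a ha b hb => ?_
  have leibniz : (a * b - b * a) * c = innerDer K a (b * c) - b * innerDer K a c := by
    rw [innerDer_mul, add_sub_cancel_right, innerDer_apply]
  rw [mem_comap, LinearMap.mulRight_apply, leibniz]
  exact sub_mem (mem_sup_left (innerDer_mem_bSpan ha (mul_mem_pSpan hb hc)))
    (mem_sup_right (mul_mem_pSpan hb (innerDer_mem_bSpan ha hc)))

end Spans

section LieGen

variable {K} {R : Type*} [NonUnitalRing R] [Module K R] {S U : Submodule K R}

lemma le_lieGen (S : Submodule K R) : S ≤ lieGen K S := le_sInf fun _ hT => hT.1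

lemma bSpan_lieGen_le (S : Submodule K R) : bSpan K (lieGen K S) (lieGen K S) ≤ lieGen K S := by
  refine bSpan_le.2 fun x hx y hy => ?_
  simp only [lieGen, mem_sInf] at *
  exact fun T hT => hT.2 x (hx T hT) y (hy T hT)

variable [SMulCommClass K R R] [IsScalarTower K R R]

/-- The normalizer `{x | [x, U] ⊆ U}` of a subspace under the commutator bracket. -/
def bracketNormalizer (U : Submodule K R) : Submodule K R :=
  ⨅ u ∈ U, U.comap (innerDer K u)

lemma mem_bracketNormalizer {x : R} :
    x ∈ bracketNormalizer U ↔ ∀ u ∈ U, x * u - u * x ∈ U := by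
  simp only [bracketNormalizer, mem_iInf, mem_comap, innerDer_apply]
  exact forall₂_congr fun u _ => sub_mem_comm_iff

lemma commutator_mem_bracketNormalizer {x y : R} (hx : x ∈ bracketNormalizer U)
    (hy : y ∈ bracketNormalizer U) : x * y - y * x ∈ bracketNormalizer U := by
  rw [mem_bracketNormalizer] at *
  intro u hu
  have jacobi : (x * y - y * x) * u - u * (x * y - y * x) =
      (x * (y * u - u * y) - (y * u - u * y) * x) -
        (y * (x * u - u * x) - (x * u - u * x) * y) := by
    noncomm_ring
  rw [jacobi]
  exact sub_mem (hx _ (hy u hu)) (hy _ (hx u hu))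

lemma lieGen_le (hSU : S ≤ U) (h : bSpan K S U ≤ U) : lieGen K S ≤ U := by
  suffices h : lieGen K S ≤ bracketNormalizer U ⊓ U from h.trans inf_le_right
  refine sInf_le ⟨le_inf (fun s hs => ?_) hSU, ?_⟩
  · exact mem_bracketNormalizer.2 (bSpan_le.1 h s hs)
  · rintro x ⟨hx, -⟩ y ⟨hy, hyU⟩
    exact ⟨commutator_mem_bracketNormalizer hx hy, mem_bracketNormalizer.1 hx y hyU⟩

end LieGen

section CommutatorIdeals

variable {K} {R : Type*} [NonUnitalRing R] [Module K R]

lemma cSp_le_Ik (k : ℕ) : cSp K (⊤ : Submodule K R) k ≤ Ik K R k :=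
  le_iSup (fun l => IklS K (⊤ : Submodule K R) (l + 1) k) 0

lemma Ik_zero : Ik K R 0 = ⊤ := top_le_iff.1 (cSp_le_Ik 0)

lemma pSpan_cSp_IklS_le (S : Submodule K R) (i j l : ℕ) :
    pSpan K (cSp K S i) (IklS K S (l + 1) j) ≤ IklS K S (l + 2) (i + j) := by
  have h := Finset.single_le_sum
    (f := fun m => pSpan K (cSp K S m) (IklS K S (l + 1) (i + j - m)))
    (fun _ _ => bot_le) (Finset.mem_range.2 (Nat.lt_succ_of_le (Nat.le_add_right i j)))
  rwa [Nat.add_sub_cancel_left] at h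

lemma IklS_add_two_le {S U : Submodule K R} {l k : ℕ}
    (h : ∀ i j, i + j = k → pSpan K (cSp K S i) (IklS K S (l + 1) j) ≤ U) :
    IklS K S (l + 2) k ≤ U :=
  Finset.sum_induction _ (· ≤ U) (fun _ _ => sup_le) bot_le fun i hi =>
    h i (k - i) (Nat.add_sub_cancel' (Nat.le_of_lt_succ (Finset.mem_range.1 hi)))

/-- Induction over products of commutator spaces, adding factors on the left: it makes the number
`ℓ` of factors disappear from all later arguments. -/
lemma Ik_le {U : ℕ → Submodule K R} (base : ∀ k, cSp K ⊤ k ≤ U k)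
    (step : ∀ i j, pSpan K (cSp K ⊤ i) (Ik K R j ⊓ U j) ≤ U (i + j)) (k : ℕ) :
    Ik K R k ≤ U k := by
  refine iSup_le fun l => ?_
  induction l generalizing k with
  | zero => exact base k
  | succ l ih =>
    refine IklS_add_two_le fun i j hij => hij ▸ le_trans ?_ (step i j)
    exact pSpan_mono le_rfl (le_inf (le_iSup (fun l => IklS K ⊤ (l + 1) j) l) (ih j))

variable [SMulCommClass K R R]

lemma pSpan_cSp_Ik_le (i j : ℕ) :
    pSpan K (cSp K (⊤ : Submodule K R) i) (Ik K R j) ≤ Ik K R (i + j) :=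
  pSpan_le_iff_mulLeft.2 fun _ hc => iSup_le fun l _ hw =>
    le_iSup (fun l => IklS K ⊤ (l + 1) (i + j)) (l + 1)
      (pSpan_cSp_IklS_le ⊤ i j l (mul_mem_pSpan hc hw))

lemma pSpan_top_Ik_le (k : ℕ) : pSpan K ⊤ (Ik K R k) ≤ Ik K R k :=
  (pSpan_cSp_Ik_le 0 k).trans_eq (by rw [Nat.zero_add])

variable [IsScalarTower K R R]

lemma pSpan_Ik_top_le (k : ℕ) : pSpan K (Ik K R k) ⊤ ≤ Ik K R k := by
  refine pSpan_le_iff_mulRight.2 fun f _ =>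
    Ik_le (U := fun k => (Ik K R k).comap (LinearMap.mulRight K f))
      (fun k c hc => ?_) (fun i j => pSpan_le.2 fun c hc w hw => ?_) k
  · exact pSpan_cSp_Ik_le k 0 (mul_mem_pSpan hc (Ik_zero (K := K) (R := R) ▸ mem_top))
  · rw [mem_comap, LinearMap.mulRight_apply, mul_assoc]
    exact pSpan_cSp_Ik_le i j (mul_mem_pSpan hc hw.2)

lemma bSpan_top_Ik_le (k : ℕ) : bSpan K ⊤ (Ik K R k) ≤ Ik K R k :=
  bSpan_le.2 fun _ _ _ hp => sub_mem (pSpan_top_Ik_le k (mul_mem_pSpan mem_top hp))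
    (pSpan_Ik_top_le k (mul_mem_pSpan hp mem_top))

lemma bSpan_top_Ik_le_Ik_succ (k : ℕ) : bSpan K ⊤ (Ik K R k) ≤ Ik K R (k + 1) := by
  refine bSpan_le_iff_innerDer.2 fun f _ =>
    Ik_le (U := fun k => (Ik K R (k + 1)).comap (innerDer K f))
      (fun k c hc => ?_) (fun i j => pSpan_le.2 fun c hc w hw => ?_) k
  · exact cSp_le_Ik (k + 1) (innerDer_mem_bSpan mem_top hc)
  · rw [mem_comap, innerDer_mul]
    refine add_mem ?_ (pSpan_cSp_Ik_le i (j + 1) (mul_mem_pSpan hc hw.2))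
    rw [add_right_comm]
    exact pSpan_cSp_Ik_le (i + 1) j (mul_mem_pSpan (innerDer_mem_bSpan mem_top hc) hw.1)

lemma pSpan_cSp_succ_Ik_le_leftIdealSpan (i j : ℕ) :
    pSpan K (cSp K ⊤ (i + 1)) (Ik K R j) ≤ leftIdealSpan (bSpan K ⊤ (Ik K R (i + j))) := by
  have leibniz (i j : ℕ) : pSpan K (cSp K ⊤ (i + 1)) (Ik K R j) ≤
      bSpan K ⊤ (Ik K R (i + j)) ⊔ pSpan K (cSp K ⊤ i) (bSpan K ⊤ (Ik K R j)) :=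
    (pSpan_bSpan_le ⊤ (cSp K ⊤ i) (Ik K R j)).trans
      (sup_le_sup_right (bSpan_mono le_rfl (pSpan_cSp_Ik_le i j)) _)
  induction i generalizing j with
  | zero => exact (leibniz 0 j).trans_eq (by rw [Nat.zero_add]; rfl)
  | succ i ih =>
    refine (leibniz (i + 1) j).trans (sup_le le_sup_left ?_)
    rw [add_assoc, add_comm 1 j]
    exact (pSpan_mono le_rfl (bSpan_top_Ik_le_Ik_succ j)).trans (ih (j + 1))

lemma Ik_succ_le_leftIdealSpan (k : ℕ) :
    Ik K R (k + 1) ≤ leftIdealSpan (bSpan K ⊤ (Ik K R k)) := by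
  refine Ik_le (U := fun | 0 => ⊤ | k + 1 => leftIdealSpan (bSpan K ⊤ (Ik K R k))) ?_ ?_ (k + 1)
  · rintro (_ | k)
    · exact le_top
    · exact (bSpan_mono le_rfl (cSp_le_Ik k)).trans le_sup_left
  · rintro (_ | i) j
    · obtain _ | j := j
      · exact le_top
      · rw [Nat.zero_add]
        exact (pSpan_mono le_rfl inf_le_right).trans (pSpan_top_leftIdealSpan_le _)
    · rw [add_right_comm]
      exact (pSpan_mono le_rfl inf_le_left).trans (pSpan_cSp_succ_Ik_le_leftIdealSpan i j)

lemma Ik_succ_le (k : ℕ) : Ik K R (k + 1) ≤ Ik K R k :=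
  (Ik_succ_le_leftIdealSpan k).trans <| sup_le (bSpan_top_Ik_le k) <|
    (pSpan_mono le_rfl (bSpan_top_Ik_le k)).trans (pSpan_top_Ik_le k)

end CommutatorIdeals

section Powers

variable {K} {A : Type*} [Ring A] [Algebra K A] {g : Submodule K A}

lemma pSpan_eq_mul (S T : Submodule K A) : pSpan K S T = S * T :=
  eq_of_forall_ge_iff fun _ => pSpan_le.trans mul_le.symm

lemma gPow_eq_pow (g : Submodule K A) {n : ℕ} (hn : n ≠ 0) : gPow K g n = g ^ n := by
  induction n using gPow.induct with
  | case1 => contradiction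
  | case2 => exact (pow_one g).symm
  | case3 n ih => rw [gPow, ih n.succ_ne_zero, pSpan_eq_mul, ← pow_succ']

lemma bSpan_pow_le (hg : bSpan K g g ≤ g) (n : ℕ) : bSpan K g (g ^ n) ≤ g ^ n := by
  induction n with
  | zero =>
    refine bSpan_le.2 fun x _ y hy => ?_
    obtain ⟨r, rfl⟩ := mem_one.1 (pow_zero g ▸ hy)
    rw [Algebra.commutes, sub_self]
    exact zero_mem _
  | succ n ih =>
    calc bSpan K g (g ^ (n + 1))
        = bSpan K g (pSpan K g (g ^ n)) := by rw [pow_succ', pSpan_eq_mul]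
      _ ≤ pSpan K (bSpan K g g) (g ^ n) ⊔ pSpan K g (bSpan K g (g ^ n)) := bSpan_pSpan_le _ _ _
      _ ≤ pSpan K g (g ^ n) := sup_le (pSpan_mono hg le_rfl) (pSpan_mono le_rfl ih)
      _ = g ^ (n + 1) := by rw [pSpan_eq_mul, pow_succ']

variable {M : Type*} [AddCommGroup M] [Module K M] {N : Submodule K M} {α δ : A →ₗ[K] M} {n : ℕ}

/-- Moving the `i` factors of `y` one at a time past the rest of `y * z` changes `α` by `-δ`
modulo `N` each time, and `δ` modulo `N` does not see the cyclic rotation. -/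
lemma map_commutator_add_nsmul_mem
    (hα : ∀ a ∈ g, ∀ w ∈ g ^ n, α (a * w - w * a) + δ (w * a) ∈ N)
    (hδ : ∀ a ∈ g, ∀ w ∈ g ^ n, δ (a * w - w * a) ∈ N)
    {i j : ℕ} (hij : i + j = n + 1) {y z : A} (hy : y ∈ g ^ i) (hz : z ∈ g ^ j) :
    α (y * z - z * y) + i • δ (y * z) ∈ N := by
  induction i generalizing j y z with
  | zero =>
    obtain ⟨r, rfl⟩ := mem_one.1 (pow_zero g ▸ hy)
    simp [Algebra.commutes]
  | succ i ih =>
    rw [pow_succ'] at hy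
    induction hy using Submodule.mul_induction_on' with
    | add y₁ _ y₂ _ h₁ h₂ =>
      convert add_mem h₁ h₂ using 1
      simp only [add_mul, mul_add, map_add, map_sub, smul_add]
      abel
    | mem_mul_mem a ha y hy =>
      have hyz : y * z ∈ g ^ n := by
        rw [show n = i + j by omega, pow_add]
        exact mul_mem_mul hy hz
      have hza : z * a ∈ g ^ (j + 1) := pow_succ g j ▸ mul_mem_mul hz ha
      have rotated := ih (by omega) hy hza
      convert add_mem (add_mem (hα a ha _ hyz) rotated) (nsmul_mem (hδ a ha _ hyz) (i + 1)) using 1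
      simp only [mul_assoc, map_sub, smul_sub, succ_nsmul]
      abel

lemma map_mem_of_cyclic [CharZero K]
    (hα : ∀ a ∈ g, ∀ w ∈ g ^ n, α (a * w - w * a) + δ (w * a) ∈ N)
    (hδ : ∀ a ∈ g, ∀ w ∈ g ^ n, δ (a * w - w * a) ∈ N) {w : A} (hw : w ∈ g ^ (n + 1)) :
    δ w ∈ N := by
  have h := map_commutator_add_nsmul_mem hα hδ (add_zero (n + 1)) hw
    (pow_zero g ▸ one_le.1 le_rfl : (1 : A) ∈ g ^ 0)
  rw [mul_one, one_mul, sub_self, map_zero, zero_add, ← Nat.cast_smul_eq_nsmul K] at h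
  exact (smul_mem_iff N (Nat.cast_ne_zero.2 n.succ_ne_zero)).1 h

end Powers

section Tensor

variable {K} {F A : Type*}

section Modules

variable [AddCommGroup F] [Module K F] [AddCommGroup A] [Module K A]
  {S S' : Submodule K F} {T T' : Submodule K A} {V : Submodule K (F ⊗[K] A)}

lemma tmul_mem_tSpan {f : F} {a : A} (hf : f ∈ S) (ha : a ∈ T) : f ⊗ₜ[K] a ∈ tSpan K S T :=
  subset_span ⟨f, hf, a, ha, rfl⟩

lemma tSpan_eq_map₂ (S : Submodule K F) (T : Submodule K A) :
    tSpan K S T = map₂ (TensorProduct.mk K F A) S T := by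
  simp only [tSpan, map₂_eq_span_image2, Set.image2, eq_comm, SetLike.mem_coe,
    TensorProduct.mk_apply]

lemma tSpan_mono (hS : S ≤ S') (hT : T ≤ T') : tSpan K S T ≤ tSpan K S' T' := by
  simpa only [tSpan_eq_map₂] using map₂_le_map₂ hS hT

lemma tSpan_sup_left (S S' : Submodule K F) (T : Submodule K A) :
    tSpan K (S ⊔ S') T = tSpan K S T ⊔ tSpan K S' T := by
  simp only [tSpan_eq_map₂, map₂_sup_left]

lemma tSpan_sup_right (S : Submodule K F) (T T' : Submodule K A) :
    tSpan K S (T ⊔ T') = tSpan K S T ⊔ tSpan K S T' := by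
  simp only [tSpan_eq_map₂, map₂_sup_right]

lemma tSpan_span_span_le {s : Set F} {t : Set A} :
    tSpan K (span K s) (span K t) ≤ V ↔ ∀ f ∈ s, ∀ a ∈ t, f ⊗ₜ[K] a ∈ V := by
  rw [tSpan_eq_map₂, map₂_span_span, span_le, Set.image2_subset_iff]
  rfl

end Modules

section Brackets

variable [NonUnitalRing F] [Module K F] [SMulCommClass K F F] [IsScalarTower K F F]
  [NonUnitalRing A] [Module K A] [SMulCommClass K A A] [IsScalarTower K A A]

lemma tmul_commutator (f p : F) (x y : A) :
    (f ⊗ₜ[K] x) * (p ⊗ₜ[K] y) - (p ⊗ₜ[K] y) * (f ⊗ₜ[K] x) =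
      (f * p) ⊗ₜ[K] (x * y - y * x) + (f * p - p * f) ⊗ₜ[K] (y * x) := by
  simp only [Algebra.TensorProduct.tmul_mul_tmul, tmul_sub, sub_tmul]
  abel

variable (S P : Submodule K F) (T Y : Submodule K A)

lemma bSpan_tSpan_tSpan_le :
    bSpan K (tSpan K S T) (tSpan K P Y) ≤
      tSpan K (pSpan K S P) (bSpan K T Y) ⊔ tSpan K (bSpan K S P) (pSpan K Y T) := by
  rw [bSpan_eq_map₂, tSpan, tSpan, map₂_span_span, span_le]
  rintro _ ⟨_, ⟨f, hf, x, hx, rfl⟩, _, ⟨p, hp, y, hy, rfl⟩, rfl⟩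
  simp only [SetLike.mem_coe, innerDer_apply, tmul_commutator]
  exact add_mem
    (mem_sup_left (tmul_mem_tSpan (mul_mem_pSpan hf hp) (commutator_mem_bSpan hx hy)))
    (mem_sup_right (tmul_mem_tSpan (commutator_mem_bSpan hf hp) (mul_mem_pSpan hy hx)))

lemma tSpan_pSpan_bSpan_le :
    tSpan K (pSpan K S P) (bSpan K T Y) ≤
      bSpan K (tSpan K S T) (tSpan K P Y) ⊔ tSpan K (bSpan K S P) (pSpan K Y T) := by
  refine tSpan_span_span_le.2 ?_
  rintro _ ⟨f, hf, p, hp, rfl⟩ _ ⟨x, hx, y, hy, rfl⟩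
  rw [eq_sub_of_add_eq (tmul_commutator f p x y).symm]
  exact sub_mem
    (mem_sup_left (commutator_mem_bSpan (tmul_mem_tSpan hf hx) (tmul_mem_tSpan hp hy)))
    (mem_sup_right (tmul_mem_tSpan (commutator_mem_bSpan hf hp) (mul_mem_pSpan hy hx)))

lemma tSpan_bSpan_pSpan_le :
    tSpan K (bSpan K S P) (pSpan K Y T) ≤
      bSpan K (tSpan K S T) (tSpan K P Y) ⊔ tSpan K (pSpan K S P) (bSpan K T Y) := by
  refine tSpan_span_span_le.2 ?_
  rintro _ ⟨f, hf, p, hp, rfl⟩ _ ⟨y, hy, x, hx, rfl⟩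
  rw [eq_sub_of_add_eq' (tmul_commutator f p x y).symm]
  exact sub_mem
    (mem_sup_left (commutator_mem_bSpan (tmul_mem_tSpan hf hx) (tmul_mem_tSpan hp hy)))
    (mem_sup_right (tmul_mem_tSpan (mul_mem_pSpan hf hp) (commutator_mem_bSpan hx hy)))

end Brackets

section LowerBound

variable [NonUnitalRing F] [Module K F] [SMulCommClass K F F] [IsScalarTower K F F]
  [Ring A] [Algebra K A] {g : Submodule K A} {S P : Submodule K F}
  {L : Submodule K (F ⊗[K] A)} {n : ℕ}

lemma tSpan_bSpan_pow_succ_le [CharZero K] (hg : bSpan K g g ≤ g)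
    (hL : bSpan K (tSpan K S g) L ≤ L) (hSP : bSpan K S P ≤ P) (hP : tSpan K P (g ^ n) ≤ L) :
    tSpan K (bSpan K S P) (g ^ (n + 1)) ≤ L := by
  rw [← span_eq (g ^ (n + 1)), bSpan, tSpan_span_span_le]
  rintro _ ⟨f, hf, p, hp, rfl⟩ w hw
  refine map_mem_of_cyclic (α := TensorProduct.mk K F A (f * p))
    (δ := TensorProduct.mk K F A (f * p - p * f)) (fun x hx y hy => ?_) (fun x hx y hy => ?_) hw
  · rw [mk_apply, mk_apply, ← tmul_commutator]
    exact hL (commutator_mem_bSpan (tmul_mem_tSpan hf hx) (hP (tmul_mem_tSpan hp hy)))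
  · exact hP (tmul_mem_tSpan (hSP (commutator_mem_bSpan hf hp))
      (bSpan_pow_le hg n (commutator_mem_bSpan hx hy)))

lemma tSpan_leftIdealSpan_bSpan_pow_le [CharZero K] (hg : bSpan K g g ≤ g)
    (hL : bSpan K (tSpan K ⊤ g) L ≤ L) (hFP : bSpan K ⊤ P ≤ P) (hP : tSpan K P (g ^ n) ≤ L) :
    tSpan K (leftIdealSpan P) (bSpan K g (g ^ n)) ≤ L := by
  rw [leftIdealSpan, tSpan_sup_left]
  refine sup_le ((tSpan_mono le_rfl (bSpan_pow_le hg n)).trans hP) ?_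
  refine (tSpan_pSpan_bSpan_le ⊤ P g (g ^ n)).trans (sup_le ?_ ?_)
  · exact (bSpan_mono le_rfl hP).trans hL
  · rw [pSpan_eq_mul, ← pow_succ]
    exact tSpan_bSpan_pow_succ_le hg hL hFP hP

lemma tSpan_bSpan_pow_succ_le_of_pow_succ_le (hg : bSpan K g g ≤ g)
    (hL : bSpan K (tSpan K S g) L ≤ L) (hSP : pSpan K S P ≤ P)
    (hpow : g ^ (n + 1) ≤ bSpan K g (g ^ n) * g ⊔ g ^ n)
    (hP : tSpan K P (bSpan K g (g ^ n)) ≤ L) (hbP : tSpan K (bSpan K S P) (g ^ n) ≤ L) :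
    tSpan K (bSpan K S P) (g ^ (n + 1)) ≤ L := by
  refine (tSpan_mono le_rfl hpow).trans ?_
  rw [tSpan_sup_right, ← pSpan_eq_mul]
  refine sup_le ((tSpan_bSpan_pSpan_le S P g _).trans (sup_le ?_ ?_)) hbP
  · exact (bSpan_mono le_rfl hP).trans hL
  · exact (tSpan_mono hSP (bSpan_mono le_rfl (bSpan_pow_le hg n))).trans hP

lemma tSpan_Ik_succ_bSpan_pow_le [CharZero K] (hg : bSpan K g g ≤ g)
    (hL : bSpan K (tSpan K ⊤ g) L ≤ L) {k : ℕ} (h : tSpan K (bSpan K ⊤ (Ik K F k)) (g ^ n) ≤ L) :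
    tSpan K (Ik K F (k + 1)) (bSpan K g (g ^ n)) ≤ L :=
  (tSpan_mono (Ik_succ_le_leftIdealSpan k) le_rfl).trans <|
    tSpan_leftIdealSpan_bSpan_pow_le hg hL (bSpan_mono le_rfl (bSpan_top_Ik_le k)) h

lemma tSpan_bSpan_Ik_pow_le [CharZero K] (hg : bSpan K g g ≤ g)
    (hpow : ∀ k, g ^ (k + 3) ≤ bSpan K g (g ^ (k + 2)) * g ⊔ g ^ (k + 2))
    (hgL : tSpan K ⊤ g ≤ L) (hL : bSpan K (tSpan K ⊤ g) L ≤ L) (k : ℕ) :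
    tSpan K (bSpan K ⊤ (Ik K F k)) (g ^ (k + 2)) ≤ L := by
  induction k with
  | zero =>
    rw [Ik_zero]
    exact tSpan_bSpan_pow_succ_le hg hL le_top ((pow_one g).symm ▸ hgL)
  | succ k ih =>
    exact tSpan_bSpan_pow_succ_le_of_pow_succ_le hg hL (pSpan_top_Ik_le (k + 1)) (hpow k)
      (tSpan_Ik_succ_bSpan_pow_le hg hL ih)
      ((tSpan_mono (bSpan_mono le_rfl (Ik_succ_le k)) le_rfl).trans ih)

end LowerBound

section UpperBound

variable [NonUnitalRing F] [Module K F] [Ring A] [Algebra K A] {g : Submodule K A}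

variable (F) in
/-- The upper bound `F ⊗ g + Σ_{k ≥ 1} (I_k(F) ⊗ [g, g^{k+1}] + [F, I_{k-1}(F)] ⊗ g^{k+1})` of
`(g, A)(F)`, with the index `k` shifted by one. -/
def currentLieUpper (g : Submodule K A) : Submodule K (F ⊗[K] A) :=
  tSpan K ⊤ g ⊔ ⨆ k : ℕ, (tSpan K (Ik K F (k + 1)) (bSpan K g (g ^ (k + 2))) ⊔
    tSpan K (bSpan K ⊤ (Ik K F k)) (g ^ (k + 2)))

lemma tSpan_Ik_bSpan_pow_le_currentLieUpper (hg : bSpan K g g ≤ g) (k : ℕ) :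
    tSpan K (Ik K F k) (bSpan K g (g ^ (k + 1))) ≤ currentLieUpper F g := by
  obtain _ | k := k
  · rw [Nat.zero_add, pow_one]
    exact (tSpan_mono le_top hg).trans le_sup_left
  · exact le_sup_of_le_right (le_iSup_of_le k le_sup_left)

lemma tSpan_bSpan_Ik_pow_le_currentLieUpper (g : Submodule K A) (k : ℕ) :
    tSpan K (bSpan K ⊤ (Ik K F k)) (g ^ (k + 2)) ≤ currentLieUpper F g :=
  le_sup_of_le_right (le_iSup_of_le k le_sup_right)

variable [SMulCommClass K F F] [IsScalarTower K F F]

lemma currentLieUpper_le_iSup_tSpan_Ik_pow (hg : bSpan K g g ≤ g) :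
    currentLieUpper F g ≤ ⨆ k : ℕ, tSpan K (Ik K F k) (g ^ (k + 1)) := by
  refine sup_le (le_iSup_of_le 0 ?_) (iSup_le fun k => le_iSup_of_le (k + 1) (sup_le ?_ ?_))
  · rw [Ik_zero, Nat.zero_add, pow_one]
  · exact tSpan_mono le_rfl (bSpan_pow_le hg (k + 2))
  · exact tSpan_mono (bSpan_top_Ik_le_Ik_succ k) le_rfl

lemma bSpan_tSpan_Ik_pow_le_currentLieUpper (hg : bSpan K g g ≤ g) (k : ℕ) :
    bSpan K (tSpan K ⊤ g) (tSpan K (Ik K F k) (g ^ (k + 1))) ≤ currentLieUpper F g := by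
  refine (bSpan_tSpan_tSpan_le ⊤ (Ik K F k) g (g ^ (k + 1))).trans (sup_le ?_ ?_)
  · exact (tSpan_mono (pSpan_top_Ik_le k) le_rfl).trans
      (tSpan_Ik_bSpan_pow_le_currentLieUpper hg k)
  · rw [pSpan_eq_mul, ← pow_succ]
    exact tSpan_bSpan_Ik_pow_le_currentLieUpper g k

lemma currentLie_le_currentLieUpper (hg : bSpan K g g ≤ g) :
    currentLie K (F := F) g ≤ currentLieUpper F g := by
  refine lieGen_le le_sup_left ?_
  calc bSpan K (tSpan K ⊤ g) (currentLieUpper F g)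
      ≤ bSpan K (tSpan K ⊤ g) (⨆ k : ℕ, tSpan K (Ik K F k) (g ^ (k + 1))) :=
        bSpan_mono le_rfl (currentLieUpper_le_iSup_tSpan_Ik_pow hg)
    _ ≤ currentLieUpper F g := by
        rw [bSpan_iSup]
        exact iSup_le (bSpan_tSpan_Ik_pow_le_currentLieUpper hg)

lemma currentLieUpper_le_currentLie [CharZero K] (hg : bSpan K g g ≤ g)
    (hpow : ∀ k, g ^ (k + 3) ≤ bSpan K g (g ^ (k + 2)) * g ⊔ g ^ (k + 2)) :
    currentLieUpper F g ≤ currentLie K (F := F) g := by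
  have generators_le : tSpan K ⊤ g ≤ currentLie K (F := F) g := le_lieGen _
  have bracket_le : bSpan K (tSpan K ⊤ g) (currentLie K (F := F) g) ≤ currentLie K g :=
    (bSpan_mono generators_le le_rfl).trans (bSpan_lieGen_le _)
  have commutators_le := tSpan_bSpan_Ik_pow_le hg hpow generators_le bracket_le
  exact sup_le generators_le <| iSup_le fun k =>
    sup_le (tSpan_Ik_succ_bSpan_pow_le hg bracket_le (commutators_le k)) (commutators_le k)

end UpperBound

end Tensor

/-- for a perfect compatible pair `(g, A)`, the current Lie algebra
equals its upper bound:
`(g,A)(F) = F ⊗ g + Σ_{k ≥ 1} ( I_k(F) ⊗ [g, g^{k+1}] + [F, I_{k-1}(F)] ⊗ g^{k+1} )`. -/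
theorem statement13 {K : Type*} [Field K] [CharZero K]
    {F : Type*} [NonUnitalRing F] [Module K F] [SMulCommClass K F F] [IsScalarTower K F F]
    {A : Type*} [Ring A] [Algebra K A]
    (g : Submodule K A) (hg : ∀ x ∈ g, ∀ y ∈ g, x * y - y * x ∈ g)
    (hperfect : ∀ k : ℕ, 2 ≤ k →
      pSpan K (bSpan K g (gPow K g k)) g ⊔ (gPow K g k ⊓ gPow K g (k + 1)) =
        gPow K g (k + 1)) :
    currentLie K (F := F) g =
      tSpan K (⊤ : Submodule K F) g ⊔
        ⨆ k : ℕ, (tSpan K (Ik K F (k + 1)) (bSpan K g (gPow K g (k + 2))) ⊔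
          tSpan K (bSpan K (⊤ : Submodule K F) (Ik K F k)) (gPow K g (k + 2))) := by
  have hbracket : bSpan K g g ≤ g := bSpan_le.2 hg
  have hpow (k : ℕ) : g ^ (k + 3) ≤ bSpan K g (g ^ (k + 2)) * g ⊔ g ^ (k + 2) := by
    have h := hperfect (k + 2) (Nat.le_add_left 2 k)
    rw [gPow_eq_pow g (k + 1).succ_ne_zero, gPow_eq_pow g (k + 2).succ_ne_zero, pSpan_eq_mul] at h
    exact h.ge.trans (sup_le_sup_left inf_le_left _)
  simp only [gPow_eq_pow g (Nat.succ_ne_zero _)]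
  exact le_antisymm (currentLie_le_currentLieUpper hbracket)
    (currentLieUpper_le_currentLie hbracket hpow)
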